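/- If n ≥ 2 is an integer and every divisor d > 1 of n² satisfies d > τ(n)² (equivalently, the smallest prime factor of n exceeds τ(n)²), then every proper divisor d of n² satisfies d·τ(n)² < n², and consequently M(n) ≠ 0. -/

import Mathlib

/-!
Every divisor `d ≠ n²` of `n²` has a complementary divisor `n² / d > 1`, which exceeds `τ(n)²` by
hypothesis; this is the first claim.

For the second, suppose `k ≥ 2` pairwise incongruent rectangles, all of area `d`, tile the square.
Comparing Lebesgue measures gives `k * d = n²` (`IsRectTiling.sum_area`), so `d` is a proper divisor
of `n²`. Rectangles of equal area and equal width are congruent, so the widths are `k` distinct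
divisors of `n²`, and `k ≤ τ(n²) ≤ τ(n)²`. Then `n² = d * k ≤ d * τ(n)²`, against the first claim.
-/

/-- An axis-parallel rectangle with positive integer side lengths,
placed at real coordinates `(x, y)` with width `w` and height `h`. -/
structure Rect where
  x : ℝ
  y : ℝ
  w : ℕ
  h : ℕ
  w_pos : 0 < w
  h_pos : 0 < h

namespace Rect

/-- The (closed) set of points covered by a rectangle. -/
def toSet (r : Rect) : Set (ℝ × ℝ) :=
  Set.Icc r.x (r.x + r.w) ×ˢ Set.Icc r.y (r.y + r.h)

/-- The (open) interior of a rectangle. -/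
def interiorSet (r : Rect) : Set (ℝ × ℝ) :=
  Set.Ioo r.x (r.x + r.w) ×ˢ Set.Ioo r.y (r.y + r.h)

/-- Two rectangles are congruent iff they have the same unordered pair
of side lengths. -/
def Congruent (r s : Rect) : Prop :=
  (r.w = s.w ∧ r.h = s.h) ∨ (r.w = s.h ∧ r.h = s.w)

end Rect

noncomputable instance : DecidableEq Rect := Classical.decEq _

/-- `S` is a finite collection of axis-parallel rectangles with positive
integer side lengths, with pairwise disjoint interiors, whose union is
the `n × n` square. -/
def IsRectTiling (n : ℕ) (S : Finset Rect) : Prop :=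
  (⋃ r ∈ S, r.toSet) = Set.Icc (0 : ℝ) (n : ℝ) ×ˢ Set.Icc (0 : ℝ) (n : ℝ) ∧
  ∀ r ∈ S, ∀ s ∈ S, r ≠ s → r.interiorSet ∩ s.interiorSet = ∅

/-- A Mondrian tiling: a rectangle tiling of the `n × n` square in which
no two rectangles are congruent. -/
def IsMondrianTiling (n : ℕ) (S : Finset Rect) : Prop :=
  IsRectTiling n S ∧ ∀ r ∈ S, ∀ s ∈ S, r ≠ s → ¬ r.Congruent s

/-- `M(n) = 0`: there is a nontrivial Mondrian tiling of the `n × n` square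
in which all rectangles have the same area. -/
def MondrianZero (n : ℕ) : Prop :=
  ∃ S : Finset Rect, IsMondrianTiling n S ∧ 2 ≤ S.card ∧
    ∃ d : ℕ, ∀ r ∈ S, r.w * r.h = d

open MeasureTheory in
lemma Rect.volume_toSet (r : Rect) : volume r.toSet = ((r.w * r.h : ℕ) : ENNReal) := by
  rw [Rect.toSet, Measure.volume_eq_prod, Measure.prod_prod, Real.volume_Icc, Real.volume_Icc]
  simp

open MeasureTheory in
lemma Rect.volume_interiorSet (r : Rect) :
    volume r.interiorSet = ((r.w * r.h : ℕ) : ENNReal) := by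
  rw [Rect.interiorSet, Measure.volume_eq_prod, Measure.prod_prod, Real.volume_Ioo,
    Real.volume_Ioo]
  simp

lemma Rect.interiorSet_subset (r : Rect) : r.interiorSet ⊆ r.toSet :=
  Set.prod_mono Set.Ioo_subset_Icc_self Set.Ioo_subset_Icc_self

open MeasureTheory in
/-- The areas of the tiles add up to the area of the square: the closed tiles cover the square and
the open tiles are disjoint subsets of it, while closed and open tiles have equal measure. -/
lemma IsRectTiling.sum_area {n : ℕ} {S : Finset Rect} (hS : IsRectTiling n S) :
    ∑ r ∈ S, r.w * r.h = n ^ 2 := by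
  obtain ⟨hcover, hdisj⟩ := hS
  have hsq : volume (Set.Icc (0 : ℝ) (n : ℝ) ×ˢ Set.Icc (0 : ℝ) (n : ℝ))
      = ((n ^ 2 : ℕ) : ENNReal) := by
    rw [Measure.volume_eq_prod, Measure.prod_prod, Real.volume_Icc]
    simp [sq]
  apply le_antisymm
  · have hdis : (S : Set Rect).PairwiseDisjoint Rect.interiorSet := fun r hr s hs hrs =>
      Set.disjoint_iff_inter_eq_empty.mpr (hdisj r hr s hs hrs)
    have hle : volume (⋃ r ∈ S, r.interiorSet) ≤ volume (⋃ r ∈ S, r.toSet) :=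
      measure_mono (Set.iUnion₂_mono fun r _ => r.interiorSet_subset)
    rw [measure_biUnion_finset hdis fun r _ => measurableSet_Ioo.prod measurableSet_Ioo,
      hcover, hsq] at hle
    simp only [Rect.volume_interiorSet] at hle
    exact_mod_cast hle
  · have hle := measure_biUnion_finset_le (μ := volume) S Rect.toSet
    rw [hcover, hsq] at hle
    simp only [Rect.volume_toSet] at hle
    exact_mod_cast hle

lemma card_divisors_sq_le (n : ℕ) :
    (Nat.divisors (n ^ 2)).card ≤ (Nat.divisors n).card ^ 2 := by
  open scoped Pointwise in
  rw [sq, sq, Nat.divisors_mul]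
  exact Finset.card_mul_le

/-- If `n ≥ 2` and every divisor `d > 1` of `n²` satisfies `d > τ(n)²`, then
every proper divisor `d` of `n²` satisfies `d·τ(n)² < n²`, and hence
`M(n) ≠ 0`. -/
theorem stmt7 (n : ℕ) (hn : 2 ≤ n)
    (h : ∀ d : ℕ, d ∣ n ^ 2 → 1 < d → (Nat.divisors n).card ^ 2 < d) :
    (∀ d : ℕ, d ∣ n ^ 2 → d ≠ n ^ 2 →
        d * (Nat.divisors n).card ^ 2 < n ^ 2) ∧
      ¬ MondrianZero n := by
  have hproper : ∀ d : ℕ, d ∣ n ^ 2 → d ≠ n ^ 2 →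
      d * (Nat.divisors n).card ^ 2 < n ^ 2 := by
    rintro d ⟨e, he⟩ hd
    have hpos : 0 < d * e := he ▸ by positivity
    have hd0 : 0 < d := Nat.pos_of_mul_pos_right hpos
    have he0 : 0 < e := Nat.pos_of_mul_pos_left hpos
    have he1 : e ≠ 1 := by
      rintro rfl
      exact hd (by rw [he, mul_one])
    have hlt := h e ⟨d, by rw [he, mul_comm]⟩ (by omega)
    rw [he]
    exact Nat.mul_lt_mul_of_pos_left hlt hd0
  refine ⟨hproper, ?_⟩
  rintro ⟨S, ⟨htile, hcong⟩, hcard, d, harea⟩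
  have hsum : S.card * d = n ^ 2 := by
    rw [← htile.sum_area, Finset.sum_congr rfl harea, Finset.sum_const, smul_eq_mul]
  have hn2 : 0 < n ^ 2 := by positivity
  have hd0 : 0 < d := Nat.pos_of_ne_zero (by rintro rfl; omega)
  have hdvd : d ∣ n ^ 2 := ⟨S.card, by rw [← hsum, mul_comm]⟩
  have hlt := hproper d hdvd (by nlinarith)
  have hle : S.card ≤ (Nat.divisors (n ^ 2)).card := by
    apply Finset.card_le_card_of_injOn Rect.w
    · intro r hr
      exact Nat.mem_divisors.mpr
        ⟨(Dvd.intro _ (harea r hr)).trans hdvd, hn2.ne'⟩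
    · intro r hr s hs hw
      by_contra hrs
      refine hcong r hr s hs hrs (Or.inl ⟨hw, ?_⟩)
      have heq : r.w * r.h = r.w * s.h := by rw [harea r hr, hw, harea s hs]
      exact Nat.eq_of_mul_eq_mul_left r.w_pos heq
  have hle' := Nat.mul_le_mul_left d (hle.trans (card_divisors_sq_le n))
  rw [mul_comm d S.card, hsum] at hle'
  omega
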